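/- Formula for CΦ₆: the generating function for 6-colored generalized Frobenius partitions satisfies CΦ₆(q) = q^{1/4} η(τ)^{-6} [ 6 θ_{1,1}(τ)² θ_{1,0}(τ) θ_{2,1}(3τ) θ_{2,1}(τ) + θ_{1,0}(τ)³ ( θ_{1,1}(6τ) θ_{1,1}(2τ) + θ_{1,0}(6τ) θ_{1,0}(2τ) ) ]. -/

import Mathlib

open Complex

/-- The q-Pochhammer symbol `(a;q)_∞ = ∏_{n ≥ 1} (1 - a q^{n-1})`. -/
noncomputable def qPoch (a q : ℂ) : ℂ := ∏' n : ℕ, (1 - a * q ^ n)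

/-- The Jacobi theta function `ϑ(z;τ) = ∑_{n ∈ 1/2 + ℤ} e^{πi n² τ + 2πi n (z + 1/2)}`. -/
noncomputable def jTheta (z τ : ℂ) : ℂ :=
  ∑' n : ℤ, Complex.exp ((Real.pi : ℂ) * I * ((n : ℂ) + 1/2) ^ 2 * τ +
    2 * (Real.pi : ℂ) * I * ((n : ℂ) + 1/2) * (z + 1/2))

/-- `ϑ_{m,a}(z;τ) = ∑_{n ∈ ℤ} q^{(2mn+a)²/(4m)} ζ^{2mn+a}` with `q = e^{2πiτ}`, `ζ = e^{2πiz}`,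
fractional powers interpreted via `q^x = e^{2πiτx}`, `ζ^x = e^{2πizx}`. -/
noncomputable def thetaMA (m a : ℝ) (z τ : ℂ) : ℂ :=
  ∑' n : ℤ, Complex.exp (2 * (Real.pi : ℂ) * I * τ * ((2 * m * n + a) ^ 2 / (4 * m)) +
    2 * (Real.pi : ℂ) * I * z * (2 * m * n + a))

/-- The theta constant `θ_{m,a}(τ) = ϑ_{m,a}(0;τ)`. -/
noncomputable def thetaC (m a : ℝ) (τ : ℂ) : ℂ := thetaMA m a 0 τ

/-!
By the Jacobi triple product, proved here as the limit of its finite form (the `q`-binomial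
theorem at `x = ζ q^{1-n}`), `(-ζq;q)_∞ (-ζ⁻¹;q)_∞` is the theta function `jacobiTheta₂ (z + τ/2) τ`
divided by `(q;q)_∞`. An addition formula writes the square of this theta function as a combination
of `ϑ_{1,0}` and `ϑ_{1,1}`, with coefficients `θ_{1,0}` and `θ_{1,1}`. In the cube of that
combination, the constant term of each cubic monomial in the `ϑ_{1,a}` is either zero, for parity
reasons, or a sum over a plane lattice of `q` to the power of a hexagonal form `x² + xy + y²`.
Completing the square and splitting by the parity of the second coordinate turns the latter into
sums of products of two theta constants, at `τ` and `3τ`.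
-/

section QBinomial

/-- The finite `q`-Pochhammer symbol `(a;q)_n = ∏_{i < n} (1 - a qⁱ)`. -/
def qPochFin {R : Type*} [CommRing R] (a q : R) (n : ℕ) : R :=
  ∏ i ∈ Finset.range n, (1 - a * q ^ i)

/-- The Gaussian binomial coefficient `[n, k]_q`, defined by the `q`-Pascal rule so that it makes
sense for every `q`, roots of unity included. -/
def gaussBinom {R : Type*} [CommSemiring R] (q : R) : ℕ → ℕ → R
  | _, 0 => 1
  | 0, _ + 1 => 0
  | n + 1, k + 1 => gaussBinom q n k + q ^ (k + 1) * gaussBinom q n (k + 1)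

section CommSemiring

variable {R : Type*} [CommSemiring R] (q : R)

@[simp]
lemma gaussBinom_zero_right (n : ℕ) : gaussBinom q n 0 = 1 := by
  cases n <;> rfl

lemma gaussBinom_succ_succ (n k : ℕ) :
    gaussBinom q (n + 1) (k + 1) = gaussBinom q n k + q ^ (k + 1) * gaussBinom q n (k + 1) :=
  rfl

lemma gaussBinom_eq_zero_of_lt {n k : ℕ} (h : n < k) : gaussBinom q n k = 0 := by
  induction n generalizing k with
  | zero => obtain ⟨k, rfl⟩ := Nat.exists_eq_add_of_lt h; simp [gaussBinom]
  | succ n ih =>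
    obtain ⟨k, rfl⟩ := Nat.exists_eq_succ_of_ne_zero (by lia : k ≠ 0)
    rw [gaussBinom_succ_succ, ih (by lia), ih (by lia), mul_zero, add_zero]

@[simp]
lemma gaussBinom_self (n : ℕ) : gaussBinom q n n = 1 := by
  induction n with
  | zero => rfl
  | succ n ih => rw [gaussBinom_succ_succ, ih, gaussBinom_eq_zero_of_lt q n.lt_succ_self]; simp

theorem prod_one_add_mul_pow_eq_sum_gaussBinom (x : R) (n : ℕ) :
    ∏ i ∈ Finset.range n, (1 + x * q ^ i) =
      ∑ k ∈ Finset.range (n + 1), q ^ k.choose 2 * gaussBinom q n k * x ^ k := by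
  induction n generalizing x with
  | zero => simp
  | succ n ih =>
    have hshift : ∏ i ∈ Finset.range n, (1 + x * q ^ (i + 1)) =
        ∏ i ∈ Finset.range n, (1 + x * q * q ^ i) :=
      Finset.prod_congr rfl fun i _ => by ring
    have hcoeff (k : ℕ) : q ^ (k + 1).choose 2 * gaussBinom q (n + 1) (k + 1) * x ^ (k + 1) =
        x * (q ^ k.choose 2 * gaussBinom q n k * (x * q) ^ k) +
          q ^ (k + 1).choose 2 * gaussBinom q n (k + 1) * (x * q) ^ (k + 1) := by
      rw [gaussBinom_succ_succ, Nat.choose_succ_succ' k 1, Nat.choose_one_right]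
      ring
    have htop : q ^ (n + 1).choose 2 * gaussBinom q n (n + 1) * (x * q) ^ (n + 1) = 0 := by
      rw [gaussBinom_eq_zero_of_lt q n.lt_succ_self, mul_zero, zero_mul]
    rw [Finset.prod_range_succ', hshift, ih, Finset.sum_range_succ' _ (n + 1)]
    simp only [hcoeff, Finset.sum_add_distrib, ← Finset.mul_sum]
    rw [Finset.sum_range_succ (fun k => _ * gaussBinom q n (k + 1) * _), htop,
      Finset.sum_range_succ' (fun k => _ * gaussBinom q n k * (x * q) ^ k) n]
    simp only [Nat.choose_zero_succ, pow_zero, gaussBinom_zero_right, mul_one]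
    ring

end CommSemiring

section CommRing

variable {R : Type*} [CommRing R] (q : R)

lemma qPochFin_succ (a : R) (n : ℕ) : qPochFin a q (n + 1) = qPochFin a q n * (1 - a * q ^ n) :=
  Finset.prod_range_succ _ n

lemma gaussBinom_add_mul_qPochFin (k m : ℕ) :
    gaussBinom q (k + m) k * (qPochFin q q k * qPochFin q q m) = qPochFin q q (k + m) := by
  induction k generalizing m with
  | zero => simp [qPochFin]
  | succ k ihk =>
    induction m with
    | zero => simp [qPochFin]
    | succ m ihm =>
      have hpascal : gaussBinom q (k + 1 + (m + 1)) (k + 1) =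
          gaussBinom q (k + (m + 1)) k + q ^ (k + 1) * gaussBinom q (k + 1 + m) (k + 1) := by
        rw [show k + 1 + m = k + (m + 1) by ring, ← gaussBinom_succ_succ]
        congr 1; ring
      have hk := ihk (m + 1)
      rw [show k + (m + 1) = k + 1 + m by ring] at hk hpascal
      rw [hpascal, show k + 1 + (m + 1) = k + 1 + m + 1 by ring, qPochFin_succ q q (k + 1 + m)]
      rw [qPochFin_succ q q m] at hk ⊢
      rw [qPochFin_succ q q k] at ihm ⊢
      linear_combination (1 - q * q ^ k) * hk + q ^ (k + 1) * (1 - q * q ^ m) * ihm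

end CommRing

section Field

variable {K : Type*} [Field K] {q ζ : K}

lemma prod_one_add_mul_zpow_mul_pow (hq : q ≠ 0) (hζ : ζ ≠ 0) (n : ℕ) :
    ∏ i ∈ Finset.range (2 * n), (1 + ζ * q ^ (1 - n : ℤ) * q ^ i) =
      ζ ^ n * q ^ (-(n.choose 2 : ℤ)) * (qPochFin (-ζ * q) q n * qPochFin (-ζ⁻¹) q n) := by
  have hlow : ∏ i ∈ Finset.range n, (1 + ζ * q ^ (1 - n : ℤ) * q ^ i) =
      ζ ^ n * q ^ (-(n.choose 2 : ℤ)) * qPochFin (-ζ⁻¹) q n := by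
    have hfactor : ∀ j ∈ Finset.range n, 1 + ζ * q ^ (1 - n : ℤ) * q ^ (n - 1 - j) =
        ζ * (q ^ j)⁻¹ * (1 - -ζ⁻¹ * q ^ j) := by
      intro j hj
      have hexp : q ^ (1 - n : ℤ) * q ^ (n - 1 - j) = (q ^ j)⁻¹ := by
        rw [← zpow_natCast, ← zpow_natCast, ← zpow_neg, ← zpow_add₀ hq]
        congr 1
        have := Finset.mem_range.mp hj
        lia
      rw [mul_assoc, hexp]
      field_simp
      ring
    rw [← Finset.prod_range_reflect, Finset.prod_congr rfl hfactor, Finset.prod_mul_distrib,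
      Finset.prod_mul_distrib, Finset.prod_const, Finset.card_range, Finset.prod_inv_distrib,
      Finset.prod_pow_eq_pow_sum, Finset.sum_range_id, ← Nat.choose_two_right, zpow_neg,
      zpow_natCast, qPochFin]
  have hhigh : ∏ i ∈ Finset.range n, (1 + ζ * q ^ (1 - n : ℤ) * q ^ (n + i)) =
      qPochFin (-ζ * q) q n := by
    refine Finset.prod_congr rfl fun i _ => ?_
    have hexp : q ^ (1 - n : ℤ) * q ^ (n + i) = q * q ^ i := by
      rw [← zpow_natCast, ← zpow_add₀ hq, ← pow_succ', ← zpow_natCast]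
      congr 1
      push_cast
      ring
    rw [mul_assoc, hexp]
    ring
  rw [two_mul, Finset.prod_range_add, hlow, hhigh]
  ring

theorem qPochFin_mul_qPochFin_eq_sum (hq : q ≠ 0) (hζ : ζ ≠ 0) (n : ℕ) :
    qPochFin (-ζ * q) q n * qPochFin (-ζ⁻¹) q n =
      ∑ k ∈ Finset.Icc (-n : ℤ) n,
        gaussBinom q (2 * n) (n + k).toNat * (ζ ^ k * q ^ (k * (k + 1) / 2)) := by
  have hfactor : ζ ^ n * q ^ (-(n.choose 2 : ℤ)) ≠ 0 :=
    mul_ne_zero (pow_ne_zero _ hζ) (zpow_ne_zero _ hq)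
  have hchoose (k : ℕ) : (k.choose 2 : ℤ) * 2 = k * (k - 1) := by
    have := Nat.choose_two_right k
    have := Nat.div_mul_cancel k.even_mul_pred_self.two_dvd
    cases k <;> push_cast <;> grind
  apply mul_left_cancel₀ hfactor
  rw [← prod_one_add_mul_zpow_mul_pow hq hζ, prod_one_add_mul_pow_eq_sum_gaussBinom, Finset.mul_sum]
  refine Finset.sum_nbij' (fun j => (j : ℤ) - n) (fun k => (n + k).toNat)
    (fun j hj => by simp only [Finset.mem_range, Finset.mem_Icc] at hj ⊢; lia)
    (fun k hk => by simp only [Finset.mem_range, Finset.mem_Icc] at hk ⊢; lia)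
    (fun j _ => by lia) (fun k hk => by simp only [Finset.mem_Icc] at hk; lia)
    fun j _ => ?_
  have hexp : (j.choose 2 : ℤ) + (1 - n) * j =
      -(n.choose 2 : ℤ) + ((j - n : ℤ) * (j - n + 1)) / 2 := by
    have hdiv := Int.ediv_mul_cancel (Int.even_mul_succ_self (j - n)).two_dvd
    linarith [hchoose j, hchoose n]
  have hpow : q ^ j.choose 2 * (ζ * q ^ (1 - n : ℤ)) ^ j = ζ ^ n * q ^ (-(n.choose 2 : ℤ)) *
      (ζ ^ (j - n : ℤ) * q ^ (((j - n : ℤ) * (j - n + 1)) / 2)) := by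
    calc q ^ j.choose 2 * (ζ * q ^ (1 - n : ℤ)) ^ j
        = ζ ^ (j : ℤ) * q ^ ((j.choose 2 : ℤ) + (1 - n) * j) := by
          rw [zpow_add₀ hq, zpow_mul, mul_pow]
          simp only [zpow_natCast]
          ring
      _ = ζ ^ (n + (j - n) : ℤ) * q ^ (-(n.choose 2 : ℤ) + ((j - n : ℤ) * (j - n + 1)) / 2) := by
          rw [hexp, add_sub_cancel]
      _ = _ := by
          rw [zpow_add₀ hq, zpow_add₀ hζ, zpow_natCast]
          ring
  rw [show ((n : ℤ) + (j - n)).toNat = j by lia]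
  linear_combination gaussBinom q (2 * n) j * hpow

end Field

end QBinomial

section TripleProduct

open Filter Topology

section NormLtOne

variable {q : ℂ} (hq : ‖q‖ < 1)
include hq

lemma summable_norm_mul_pow (a : ℂ) : Summable fun n : ℕ => ‖-(a * q ^ n)‖ := by
  simpa only [norm_neg, norm_mul, norm_pow] using
    (summable_geometric_of_lt_one (norm_nonneg q) hq).mul_left ‖a‖

lemma tendsto_qPochFin (a : ℂ) : Tendsto (qPochFin a q) atTop (𝓝 (qPoch a q)) := by
  have hmul : Multipliable fun n : ℕ => 1 - a * q ^ n := by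
    simpa only [sub_eq_add_neg] using multipliable_one_add_of_summable (summable_norm_mul_pow hq a)
  exact hmul.hasProd.tendsto_prod_nat

lemma one_sub_mul_pow_ne_zero (n : ℕ) : 1 - q * q ^ n ≠ 0 := by
  rw [← pow_succ', sub_ne_zero]
  intro h
  have := pow_lt_one₀ (norm_nonneg q) hq n.succ_ne_zero
  rw [← norm_pow, ← h, norm_one] at this
  exact lt_irrefl _ this

lemma qPochFin_self_ne_zero (n : ℕ) : qPochFin q q n ≠ 0 :=
  Finset.prod_ne_zero_iff.mpr fun i _ => one_sub_mul_pow_ne_zero hq i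

lemma qPoch_self_ne_zero : qPoch q q ≠ 0 := by
  have := tprod_one_add_ne_zero_of_summable (f := fun n : ℕ => -(q * q ^ n))
    (fun n => by simpa only [← sub_eq_add_neg] using one_sub_mul_pow_ne_zero hq n)
    (summable_norm_mul_pow hq q)
  simpa only [qPoch, sub_eq_add_neg] using this

lemma gaussBinom_eq_div {n k : ℕ} (hk : k ≤ n) :
    gaussBinom q n k = qPochFin q q n / (qPochFin q q k * qPochFin q q (n - k)) := by
  obtain ⟨m, rfl⟩ := Nat.exists_eq_add_of_le hk
  rw [Nat.add_sub_cancel_left, eq_div_iff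
    (mul_ne_zero (qPochFin_self_ne_zero hq k) (qPochFin_self_ne_zero hq m)),
    gaussBinom_add_mul_qPochFin]

lemma exists_norm_gaussBinom_le : ∃ C : ℝ, ∀ n k, ‖gaussBinom q n k‖ ≤ C := by
  have hlim := tendsto_qPochFin hq q
  obtain ⟨A, hA⟩ := hlim.norm.bddAbove_range
  obtain ⟨B, hB⟩ := (hlim.inv₀ (qPoch_self_ne_zero hq)).norm.bddAbove_range
  replace hA n : ‖qPochFin q q n‖ ≤ A := hA ⟨n, rfl⟩
  replace hB n : ‖(qPochFin q q n)⁻¹‖ ≤ B := hB ⟨n, rfl⟩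
  have hA₀ : 0 ≤ A := (norm_nonneg _).trans (hA 0)
  have hB₀ : 0 ≤ B := (norm_nonneg _).trans (hB 0)
  refine ⟨A * (B * B), fun n k => ?_⟩
  rcases le_or_gt k n with hk | hk
  · rw [gaussBinom_eq_div hq hk, div_eq_mul_inv, mul_inv, norm_mul, norm_mul]
    gcongr
    exacts [hA n, hB k, hB (n - k)]
  · rw [gaussBinom_eq_zero_of_lt q hk, norm_zero]
    positivity

lemma tendsto_gaussBinom_two_mul (k : ℤ) :
    Tendsto (fun n : ℕ => gaussBinom q (2 * n) (n + k).toNat) atTop (𝓝 (qPoch q q)⁻¹) := by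
  have hne := qPoch_self_ne_zero hq
  have hlim := tendsto_qPochFin hq q
  have hN : Tendsto (fun n : ℕ => 2 * n) atTop atTop :=
    tendsto_atTop_atTop.mpr fun b => ⟨b, fun n hn => by lia⟩
  have hplus : Tendsto (fun n : ℕ => (n + k).toNat) atTop atTop :=
    tendsto_atTop_atTop.mpr fun b => ⟨(b - k).toNat, fun n hn => by lia⟩
  have hminus : Tendsto (fun n : ℕ => 2 * n - (n + k).toNat) atTop atTop :=
    tendsto_atTop_atTop.mpr fun b => ⟨b + k.natAbs, fun n hn => by lia⟩
  have hratio := (hlim.comp hN).div ((hlim.comp hplus).mul (hlim.comp hminus)) (mul_ne_zero hne hne)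
  rw [div_mul_cancel_left₀ hne] at hratio
  refine hratio.congr' ?_
  filter_upwards [eventually_ge_atTop k.natAbs] with n hn
  exact (gaussBinom_eq_div hq (by lia)).symm

end NormLtOne

lemma norm_exp_two_pi_I_mul_lt_one {τ : ℂ} (hτ : 0 < τ.im) : ‖cexp (2 * Real.pi * I * τ)‖ < 1 :=
  UpperHalfPlane.norm_exp_two_pi_I_lt_one ⟨τ, hτ⟩

lemma exp_zpow_mul_exp_zpow_eq_jacobiTheta₂_term (z τ : ℂ) (k : ℤ) :
    cexp (2 * Real.pi * I * z) ^ k * cexp (2 * Real.pi * I * τ) ^ (k * (k + 1) / 2) =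
      jacobiTheta₂_term k (z + τ / 2) τ := by
  have hdiv : ((k * (k + 1) / 2 : ℤ) : ℂ) = k * (k + 1) / 2 := by
    rw [Int.cast_div (Int.even_mul_succ_self k).two_dvd (by norm_num)]
    push_cast
    rfl
  rw [← Complex.exp_int_mul, ← Complex.exp_int_mul, hdiv, ← Complex.exp_add, jacobiTheta₂_term]
  congr 1
  ring

theorem jacobi_triple_product {τ : ℂ} (hτ : 0 < τ.im) (z : ℂ) {q ζ : ℂ}
    (hq : q = cexp (2 * Real.pi * I * τ)) (hζ : ζ = cexp (2 * Real.pi * I * z)) :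
    qPoch (-ζ * q) q * qPoch (-ζ⁻¹) q = (qPoch q q)⁻¹ * jacobiTheta₂ (z + τ / 2) τ := by
  have hq₁ : ‖q‖ < 1 := hq ▸ norm_exp_two_pi_I_mul_lt_one hτ
  have hprod := (tendsto_qPochFin hq₁ (-ζ * q)).mul (tendsto_qPochFin hq₁ (-ζ⁻¹))
  obtain ⟨C, hC⟩ := exists_norm_gaussBinom_le hq₁
  let T (k : ℤ) : ℂ := jacobiTheta₂_term k (z + τ / 2) τ
  have hT : Summable T := (summable_jacobiTheta₂_term_iff _ τ).mpr hτ
  let F (n : ℕ) (k : ℤ) : ℂ := gaussBinom q (2 * n) (n + k).toNat * T k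
  have hsum : Tendsto (fun n : ℕ => ∑' k, (Finset.Icc (-n : ℤ) n : Set ℤ).indicator (F n) k) atTop
      (𝓝 (∑' k, (qPoch q q)⁻¹ * T k)) := by
    refine tendsto_tsum_of_dominated_convergence (bound := fun k => C * ‖T k‖)
      (hT.norm.mul_left C) (fun k => ?_) (.of_forall fun n k => ?_)
    · refine ((tendsto_gaussBinom_two_mul hq₁ k).mul_const (T k)).congr' ?_
      filter_upwards [eventually_ge_atTop k.natAbs] with n hn
      rw [Set.indicator_of_mem (by simp; lia)]
    · refine (norm_indicator_le_norm_self _ _).trans ?_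
      rw [norm_mul]
      exact mul_le_mul_of_nonneg_right (hC _ _) (norm_nonneg _)
  rw [jacobiTheta₂, ← tsum_mul_left]
  refine tendsto_nhds_unique hprod (hsum.congr fun n => ?_)
  rw [qPochFin_mul_qPochFin_eq_sum (hq ▸ Complex.exp_ne_zero _) (hζ ▸ Complex.exp_ne_zero _) n,
    ← sum_eq_tsum_indicator]
  simp only [F, T, hq, hζ, exp_zpow_mul_exp_zpow_eq_jacobiTheta₂_term]

end TripleProduct

section Theta

section Tsum

lemma hasSum_mul_prod {ι κ : Type*} {f : ι → ℂ} {g : κ → ℂ} {a b : ℂ} (hf : HasSum f a)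
    (hg : HasSum g b) : HasSum (fun p : ι × κ => f p.1 * g p.2) (a * b) :=
  hf.mul hg (summable_mul_of_summable_norm hf.summable.norm hg.summable.norm)

-- The shear by `p.2` diagonalises the quadratic forms to which this is applied.
lemma hasSum_int_prod_of_even_of_odd {M : Type*} [AddCommMonoid M] [TopologicalSpace M]
    [ContinuousAdd M] {f : ℤ × ℤ → M} {a b : M}
    (he : HasSum (fun p : ℤ × ℤ => f (p.1 - p.2, 2 * p.2)) a)
    (ho : HasSum (fun p : ℤ × ℤ => f (p.1 - p.2, 2 * p.2 + 1)) b) : HasSum f (a + b) := by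
  let φ (p : ℤ × ℤ) : ℤ × ℤ := (p.1 - p.2, 2 * p.2)
  let ψ (p : ℤ × ℤ) : ℤ × ℤ := (p.1 - p.2, 2 * p.2 + 1)
  have hφ : φ.Injective := fun p p' h => by
    simp only [φ, Prod.mk.injEq] at h
    ext <;> lia
  have hψ : ψ.Injective := fun p p' h => by
    simp only [ψ, Prod.mk.injEq] at h
    ext <;> lia
  refine HasSum.add_isCompl (s := Set.range φ) (t := Set.range ψ) ?_
    (hφ.hasSum_range_iff.mpr he) (hψ.hasSum_range_iff.mpr ho)
  refine isCompl_iff.mpr ⟨Set.disjoint_left.mpr ?_, codisjoint_iff_le_sup.mpr ?_⟩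
  · rintro _ ⟨p, rfl⟩ ⟨p', h⟩
    simp only [φ, ψ, Prod.mk.injEq] at h
    lia
  · rintro ⟨i, j⟩ -
    rcases Int.even_or_odd' j with ⟨n, rfl | rfl⟩
    · exact .inl ⟨(i + n, n), by simp [φ]⟩
    · exact .inr ⟨(i + n, n), by simp [ψ]⟩

end Tsum

section Series

/-- The summand of the series defining `thetaMA`. -/
noncomputable def thetaMATerm (m a : ℝ) (z τ : ℂ) (n : ℤ) : ℂ :=
  cexp (2 * Real.pi * I * τ * ((2 * m * n + a) ^ 2 / (4 * m)) +
    2 * Real.pi * I * z * (2 * m * n + a))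

lemma thetaMATerm_eq_exp_mul_jacobiTheta₂_term {m : ℝ} (hm : m ≠ 0) (a : ℝ) (z τ : ℂ) (n : ℤ) :
    thetaMATerm m a z τ n = cexp (2 * Real.pi * I * (τ * a ^ 2 / (4 * m) + a * z)) *
      jacobiTheta₂_term n (2 * m * z + a * τ) (2 * m * τ) := by
  have : (m : ℂ) ≠ 0 := ofReal_ne_zero.mpr hm
  rw [thetaMATerm, jacobiTheta₂_term, ← Complex.exp_add]
  congr 1
  field_simp
  ring

lemma thetaMA_eq_exp_mul_jacobiTheta₂ {m : ℝ} (hm : m ≠ 0) (a : ℝ) (z τ : ℂ) :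
    thetaMA m a z τ = cexp (2 * Real.pi * I * (τ * a ^ 2 / (4 * m) + a * z)) *
      jacobiTheta₂ (2 * m * z + a * τ) (2 * m * τ) := by
  rw [jacobiTheta₂, ← tsum_mul_left]
  exact tsum_congr (thetaMATerm_eq_exp_mul_jacobiTheta₂_term hm a z τ)

lemma thetaMATerm_add (m a : ℝ) (w z τ : ℂ) (n : ℤ) :
    thetaMATerm m a (w + z) τ n =
      thetaMATerm m a w τ n * cexp (2 * Real.pi * I * (2 * m * n + a) * z) := by
  rw [thetaMATerm, thetaMATerm, ← Complex.exp_add]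
  congr 1
  ring

variable {m : ℝ} (hm : 0 < m) (a : ℝ) (z : ℂ) {τ : ℂ} (hτ : 0 < τ.im)
include hm hτ

lemma im_two_mul_mul_pos : 0 < (2 * m * τ).im := by
  have : 0 < 2 * m * τ.im := by positivity
  simpa using this

lemma hasSum_thetaMATerm : HasSum (thetaMATerm m a z τ) (thetaMA m a z τ) := by
  rw [thetaMA_eq_exp_mul_jacobiTheta₂ hm.ne',
    funext (thetaMATerm_eq_exp_mul_jacobiTheta₂_term hm.ne' a z τ)]
  exact (hasSum_jacobiTheta₂_term _ (im_two_mul_mul_pos hm hτ)).mul_left _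

lemma continuous_thetaMA : Continuous fun z => thetaMA m a z τ := by
  have him := im_two_mul_mul_pos hm hτ
  have hθ : Continuous fun z => jacobiTheta₂ z (2 * m * τ) :=
    continuous_iff_continuousAt.mpr fun z => (differentiableAt_jacobiTheta₂_fst z him).continuousAt
  simp only [thetaMA_eq_exp_mul_jacobiTheta₂ hm.ne']
  fun_prop

end Series

section ThetaConstants

lemma thetaC_two_mul_sub (m a : ℝ) (τ : ℂ) : thetaC m (2 * m - a) τ = thetaC m a τ := by
  let reflect : ℤ ≃ ℤ := Equiv.subLeft (-1)
  rw [thetaC, thetaMA, ← reflect.tsum_eq]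
  refine tsum_congr fun n => ?_
  simp only [reflect, Equiv.subLeft_apply]
  push_cast
  ring_nf

lemma thetaC_mul_mul {k : ℝ} (hk : k ≠ 0) (m a : ℝ) (τ : ℂ) :
    thetaC (k * m) (k * a) τ = thetaC m a (k * τ) := by
  have : (k : ℂ) ≠ 0 := ofReal_ne_zero.mpr hk
  refine tsum_congr fun n => ?_
  congr 1
  push_cast
  rcases eq_or_ne (m : ℂ) 0 with hm | hm
  · simp [hm]
  · field_simp
    ring

end ThetaConstants

theorem jacobiTheta₂_sub_mul_jacobiTheta₂_add {τ : ℂ} (hτ : 0 < τ.im) (u v : ℂ) :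
    jacobiTheta₂ (u - v) τ * jacobiTheta₂ (u + v) τ =
      thetaMA 1 0 u τ * thetaMA 1 0 v τ + thetaMA 1 1 u τ * thetaMA 1 1 v τ := by
  let shear : ℤ × ℤ ≃ ℤ × ℤ := Equiv.prodShear (Equiv.refl ℤ) Equiv.addLeft
  refine (shear.hasSum_iff.mpr (hasSum_mul_prod (hasSum_jacobiTheta₂_term (u - v) hτ)
    (hasSum_jacobiTheta₂_term (u + v) hτ))).unique (hasSum_int_prod_of_even_of_odd ?_ ?_)
  · convert hasSum_mul_prod (hasSum_thetaMATerm one_pos 0 u hτ)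
      (hasSum_thetaMATerm one_pos 0 v hτ) using 2 with p
    simp only [shear, Function.comp_apply, Equiv.prodShear_apply, Equiv.refl_apply,
      Equiv.coe_addLeft, jacobiTheta₂_term, thetaMATerm, ← Complex.exp_add]
    push_cast
    ring_nf
  · convert hasSum_mul_prod (hasSum_thetaMATerm one_pos 1 u hτ)
      (hasSum_thetaMATerm one_pos 1 v hτ) using 2 with p
    simp only [shear, Function.comp_apply, Equiv.prodShear_apply, Equiv.refl_apply,
      Equiv.coe_addLeft, jacobiTheta₂_term, thetaMATerm, ← Complex.exp_add]
    push_cast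
    ring_nf

end Theta

section ConstantTerm

lemma integral_exp_two_pi_I_int_mul (n : ℤ) :
    ∫ t in (0 : ℝ)..1, cexp (2 * Real.pi * I * n * t) = if n = 0 then 1 else 0 := by
  split_ifs with hn
  · simp [hn]
  · have hc : 2 * Real.pi * I * n ≠ 0 := mul_ne_zero two_pi_I_ne_zero (Int.cast_ne_zero.mpr hn)
    have hone : cexp (2 * Real.pi * I * n) = 1 := by
      rw [mul_comm]
      exact Complex.exp_int_mul_two_pi_mul_I n
    rw [integral_exp_mul_complex hc]
    simp [hone]

theorem hasSum_integral_of_hasSum_exp {ι : Type*} [Countable ι] {c : ι → ℂ} {ν : ι → ℤ}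
    {G : ℝ → ℂ} (hG : ∀ t : ℝ, HasSum (fun i => c i * cexp (2 * Real.pi * I * ν i * t)) (G t)) :
    HasSum ({i | ν i = 0}.indicator c) (∫ t in (0 : ℝ)..1, G t) := by
  have hc : Summable fun i => ‖c i‖ := by simpa using (hG 0).summable.norm
  have hnorm (i : ι) (t : ℝ) : ‖c i * cexp (2 * Real.pi * I * ν i * t)‖ = ‖c i‖ := by
    rw [norm_mul, Complex.norm_exp]
    simp
  have hint := intervalIntegral.hasSum_integral_of_dominated_convergence
    (μ := MeasureTheory.volume) (a := 0) (b := 1) (fun i _ => ‖c i‖)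
    (fun i => Continuous.aestronglyMeasurable (by fun_prop))
    (fun i => .of_forall fun t _ => (hnorm i t).le) (.of_forall fun _ _ => hc)
    intervalIntegrable_const (.of_forall fun t _ => hG t)
  refine hint.congr_fun fun i => ?_
  simp only [intervalIntegral.integral_const_mul, integral_exp_two_pi_I_int_mul, mul_ite, mul_one,
    mul_zero, Set.indicator_apply, Set.mem_ofPred_eq]

lemma thetaMATerm_mul_mul_of_add_eq_zero {m : ℝ} (hm : m ≠ 0) {a b c : ℝ} {x y z : ℤ}
    (h : 2 * m * (x + y + z) + (a + b + c) = 0) (w τ : ℂ) :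
    thetaMATerm m a w τ x * (thetaMATerm m b w τ y * thetaMATerm m c w τ z) =
      cexp (2 * Real.pi * I * τ * (((2 * (2 * m * x + a) + (2 * m * y + b)) ^ 2 +
        3 * (2 * m * y + b) ^ 2) / (8 * m))) := by
  have hz : 2 * m * z + c = (-((2 * m * x + a) + (2 * m * y + b)) : ℂ) := by
    have : (2 * m * (x + y + z) + (a + b + c) : ℂ) = 0 := mod_cast h
    linear_combination this
  have hm' : (m : ℂ) ≠ 0 := ofReal_ne_zero.mpr hm
  simp only [thetaMATerm, hz, ← Complex.exp_add]
  congr 1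
  field_simp
  ring

lemma hasSum_exp_sq_add_three_mul_sq {m : ℝ} (hm : 0 < m) (a b : ℝ) {τ : ℂ} (hτ : 0 < τ.im) :
    HasSum (fun p : ℤ × ℤ => cexp (2 * Real.pi * I * τ *
        (((2 * (2 * m * p.1 + a) + (2 * m * p.2 + b)) ^ 2 + 3 * (2 * m * p.2 + b) ^ 2) / (8 * m))))
      (thetaC (2 * m) (2 * a + b) τ * thetaC (2 * m) b (3 * τ) +
        thetaC (2 * m) (2 * a + b + 2 * m) τ * thetaC (2 * m) (b + 2 * m) (3 * τ)) := by
  have hm' : (m : ℂ) ≠ 0 := ofReal_ne_zero.mpr hm.ne'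
  have hτ₃ : 0 < (3 * τ).im := by simpa using hτ
  have hθ (c d : ℝ) := hasSum_mul_prod (hasSum_thetaMATerm (m := 2 * m) (by positivity) c 0 hτ)
    (hasSum_thetaMATerm (m := 2 * m) (by positivity) d 0 hτ₃)
  refine hasSum_int_prod_of_even_of_odd ((hθ _ _).congr_fun fun p => ?_)
    ((hθ _ _).congr_fun fun p => ?_) <;>
  · rw [thetaMATerm, thetaMATerm, ← Complex.exp_add]
    congr 1
    push_cast
    field_simp
    ring

variable {m : ℕ} (hm : 0 < m) {τ : ℂ} (hτ : 0 < τ.im) (w : ℂ)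
include hm hτ

lemma hasSum_integral_thetaMA_mul_mul (a b c : ℤ) :
    HasSum ({p : ℤ × ℤ × ℤ | 2 * m * (p.1 + p.2.1 + p.2.2) + (a + b + c) = 0}.indicator
        fun p => thetaMATerm m a w τ p.1 * (thetaMATerm m b w τ p.2.1 * thetaMATerm m c w τ p.2.2))
      (∫ t in (0 : ℝ)..1,
        thetaMA m a (w + t) τ * (thetaMA m b (w + t) τ * thetaMA m c (w + t) τ)) := by
  have hm' : (0 : ℝ) < m := Nat.cast_pos.mpr hm
  refine hasSum_integral_of_hasSum_exp fun t => ?_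
  convert hasSum_mul_prod (hasSum_thetaMATerm hm' a (w + t) hτ) (hasSum_mul_prod
    (hasSum_thetaMATerm hm' b (w + t) hτ) (hasSum_thetaMATerm hm' c (w + t) hτ)) using 2 with p
  have hexp : cexp (2 * Real.pi * I *
        (2 * m * (p.1 + p.2.1 + p.2.2) + (a + b + c) : ℤ) * t) =
      cexp (2 * Real.pi * I * (2 * m * p.1 + a) * t) *
        (cexp (2 * Real.pi * I * (2 * m * p.2.1 + b) * t) *
          cexp (2 * Real.pi * I * (2 * m * p.2.2 + c) * t)) := by
    rw [← Complex.exp_add, ← Complex.exp_add]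
    congr 1
    push_cast
    ring
  simp only [thetaMATerm_add, hexp, ofReal_natCast, ofReal_intCast]
  ring

theorem integral_thetaMA_mul_mul_eq_zero {a b c : ℤ} (h : ¬ (2 * m : ℤ) ∣ a + b + c) :
    ∫ t in (0 : ℝ)..1, thetaMA m a (w + t) τ * (thetaMA m b (w + t) τ * thetaMA m c (w + t) τ) =
      0 := by
  have hempty : {p : ℤ × ℤ × ℤ | 2 * m * (p.1 + p.2.1 + p.2.2) + (a + b + c) = 0} = ∅ :=
    Set.eq_empty_of_forall_notMem fun p hp =>
      h ⟨-(p.1 + p.2.1 + p.2.2), by linear_combination hp.out⟩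
  have hsum := hasSum_integral_thetaMA_mul_mul hm hτ w a b c
  rw [hempty, Set.indicator_empty] at hsum
  exact hsum.unique hasSum_zero

theorem integral_thetaMA_mul_mul {a b c : ℤ} (h : (2 * m : ℤ) ∣ a + b + c) :
    ∫ t in (0 : ℝ)..1, thetaMA m a (w + t) τ * (thetaMA m b (w + t) τ * thetaMA m c (w + t) τ) =
      thetaC (2 * m) (2 * a + b) τ * thetaC (2 * m) b (3 * τ) +
        thetaC (2 * m) (2 * a + b + 2 * m) τ * thetaC (2 * m) (b + 2 * m) (3 * τ) := by
  obtain ⟨s, hs⟩ := h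
  let S : Set (ℤ × ℤ × ℤ) := {p | 2 * m * (p.1 + p.2.1 + p.2.2) + (a + b + c) = 0}
  let φ (p : ℤ × ℤ) : ℤ × ℤ × ℤ := (p.1, p.2, -s - p.1 - p.2)
  have hφ : φ.Injective := fun p p' h => by
    simp only [φ, Prod.mk.injEq] at h
    exact Prod.ext h.1 h.2.1
  have hφS (p : ℤ × ℤ) : φ p ∈ S := by
    simp only [φ, S, Set.mem_ofPred_eq, hs]
    ring
  have hSφ : S ⊆ Set.range φ := by
    rintro ⟨x, y, z⟩ h
    have : (2 * m : ℤ) * (x + y + z + s) = 0 := by linear_combination h.out - hs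
    have : x + y + z + s = 0 := (mul_eq_zero.mp this).resolve_left (by positivity)
    exact ⟨(x, y), by simp only [φ, Prod.mk.injEq, true_and]; lia⟩
  have hsum := (hφ.hasSum_iff fun p hp => Set.indicator_of_notMem (fun h => hp (hSφ h)) _).mpr
    (hasSum_integral_thetaMA_mul_mul hm hτ w a b c)
  refine hsum.unique ((hasSum_exp_sq_add_three_mul_sq (Nat.cast_pos.mpr hm) a b hτ).congr_fun
    fun p => ?_)
  rw [Function.comp_apply, Set.indicator_of_mem (hφS p),
    thetaMATerm_mul_mul_of_add_eq_zero (Nat.cast_ne_zero.mpr hm.ne') (mod_cast hφS p)]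

end ConstantTerm

section SixthPower

variable {τ : ℂ} (hτ : 0 < τ.im) (w : ℂ)
include hτ

lemma jacobiTheta₂_sq : jacobiTheta₂ w τ ^ 2 =
    thetaC 1 0 τ * thetaMA 1 0 w τ + thetaC 1 1 τ * thetaMA 1 1 w τ := by
  have h := jacobiTheta₂_sub_mul_jacobiTheta₂_add hτ w 0
  rw [sub_zero, add_zero] at h
  rw [sq, h, thetaC, thetaC]
  ring

lemma integral_thetaMA_one_zero_pow_three :
    ∫ t in (0 : ℝ)..1, thetaMA 1 0 (w + t) τ ^ 3 =
      thetaC 1 1 (6 * τ) * thetaC 1 1 (2 * τ) + thetaC 1 0 (6 * τ) * thetaC 1 0 (2 * τ) := by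
  have hdouble (a : ℝ) (τ' : ℂ) : thetaC 2 (2 * a) τ' = thetaC 1 a (2 * τ') := by
    simpa using thetaC_mul_mul two_ne_zero 1 a τ'
  have hsplit : ∫ t in (0 : ℝ)..1, thetaMA 1 0 (w + t) τ ^ 3 =
      thetaC 2 (2 * 0) τ * thetaC 2 (2 * 0) (3 * τ) +
        thetaC 2 (2 * 1) τ * thetaC 2 (2 * 1) (3 * τ) := by
    simpa [pow_three] using
      integral_thetaMA_mul_mul one_pos hτ w (a := 0) (b := 0) (c := 0) (by norm_num)
  rw [hsplit, hdouble, hdouble, hdouble, hdouble, show 2 * (3 * τ) = 6 * τ by ring]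
  ring

lemma integral_thetaMA_one_zero_mul_thetaMA_one_one_sq :
    ∫ t in (0 : ℝ)..1, thetaMA 1 0 (w + t) τ * thetaMA 1 1 (w + t) τ ^ 2 =
      2 * (thetaC 2 1 (3 * τ) * thetaC 2 1 τ) := by
  have hreflect (τ' : ℂ) : thetaC 2 3 τ' = thetaC 2 1 τ' := by
    rw [← thetaC_two_mul_sub]
    norm_num
  have hsplit : ∫ t in (0 : ℝ)..1, thetaMA 1 0 (w + t) τ * thetaMA 1 1 (w + t) τ ^ 2 =
      thetaC 2 1 τ * thetaC 2 1 (3 * τ) + thetaC 2 3 τ * thetaC 2 3 (3 * τ) := by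
    have h12 : (1 + 2 : ℝ) = 3 := by norm_num
    simpa [sq, h12] using
      integral_thetaMA_mul_mul one_pos hτ w (a := 0) (b := 1) (c := 1) (by norm_num)
  rw [hsplit, hreflect, hreflect]
  ring

lemma integral_thetaMA_one_zero_sq_mul_thetaMA_one_one :
    ∫ t in (0 : ℝ)..1, thetaMA 1 0 (w + t) τ ^ 2 * thetaMA 1 1 (w + t) τ = 0 := by
  simpa [sq, mul_assoc] using
    integral_thetaMA_mul_mul_eq_zero one_pos hτ w (a := 0) (b := 0) (c := 1) (by norm_num)

lemma integral_thetaMA_one_one_pow_three :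
    ∫ t in (0 : ℝ)..1, thetaMA 1 1 (w + t) τ ^ 3 = 0 := by
  simpa [pow_three] using
    integral_thetaMA_mul_mul_eq_zero one_pos hτ w (a := 1) (b := 1) (c := 1) (by norm_num)

theorem integral_jacobiTheta₂_pow_six :
    ∫ t in (0 : ℝ)..1, jacobiTheta₂ (w + t) τ ^ 6 =
      6 * thetaC 1 1 τ ^ 2 * thetaC 1 0 τ * thetaC 2 1 (3 * τ) * thetaC 2 1 τ +
        thetaC 1 0 τ ^ 3 *
          (thetaC 1 1 (6 * τ) * thetaC 1 1 (2 * τ) + thetaC 1 0 (6 * τ) * thetaC 1 0 (2 * τ)) := by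
  set A := thetaC 1 0 τ
  set B := thetaC 1 1 τ
  let f (t : ℝ) : ℂ := thetaMA 1 0 (w + t) τ
  let g (t : ℝ) : ℂ := thetaMA 1 1 (w + t) τ
  have hexpand (t : ℝ) : jacobiTheta₂ (w + t) τ ^ 6 =
      A ^ 3 * f t ^ 3 + 3 * A ^ 2 * B * (f t ^ 2 * g t) + 3 * A * B ^ 2 * (f t * g t ^ 2) +
        B ^ 3 * g t ^ 3 := by
    rw [pow_mul _ 2 3, jacobiTheta₂_sq hτ]
    ring
  have hf : Continuous f := (continuous_thetaMA one_pos 0 hτ).comp (by fun_prop)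
  have hg : Continuous g := (continuous_thetaMA one_pos 1 hτ).comp (by fun_prop)
  simp only [hexpand]
  rw [intervalIntegral.integral_add, intervalIntegral.integral_add, intervalIntegral.integral_add]
  · simp only [intervalIntegral.integral_const_mul, f, g, integral_thetaMA_one_zero_pow_three hτ,
      integral_thetaMA_one_zero_sq_mul_thetaMA_one_one hτ,
      integral_thetaMA_one_zero_mul_thetaMA_one_one_sq hτ, integral_thetaMA_one_one_pow_three hτ]
    ring
  all_goals exact Continuous.intervalIntegrable (by fun_prop) _ _

end SixthPower

/-- Formula for `CΦ₆(q)`, the constant term in `ζ` of `(-ζq;q)_∞⁶(-ζ⁻¹;q)_∞⁶`,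
computed as `∫_0^1` over `ζ = e^{2πit}`, with `η(τ) = q^{1/24}(q;q)_∞`. -/
theorem CPhi6_formula (τ : ℂ) (hτ : 0 < τ.im)
    (q : ℂ) (hq : q = Complex.exp (2 * (Real.pi : ℂ) * I * τ)) :
    (∫ t in (0:ℝ)..1,
        qPoch (-(Complex.exp (2 * (Real.pi : ℂ) * I * t)) * q) q ^ 6 *
          qPoch (-(Complex.exp (2 * (Real.pi : ℂ) * I * t))⁻¹) q ^ 6) =
      Complex.exp (2 * (Real.pi : ℂ) * I * τ * (1/4)) /
          (Complex.exp (2 * (Real.pi : ℂ) * I * τ * (1/24)) * qPoch q q) ^ 6 *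
        (6 * thetaC 1 1 τ ^ 2 * thetaC 1 0 τ * thetaC 2 1 (3 * τ) * thetaC 2 1 τ +
          thetaC 1 0 τ ^ 3 *
            (thetaC 1 1 (6 * τ) * thetaC 1 1 (2 * τ) + thetaC 1 0 (6 * τ) * thetaC 1 0 (2 * τ))) := by
  have hintegrand (t : ℝ) :
      qPoch (-cexp (2 * Real.pi * I * t) * q) q ^ 6 *
          qPoch (-(cexp (2 * Real.pi * I * t))⁻¹) q ^ 6 =
        (qPoch q q ^ 6)⁻¹ * jacobiTheta₂ (τ / 2 + t) τ ^ 6 := by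
    rw [← mul_pow, jacobi_triple_product hτ t hq rfl, mul_pow, inv_pow, add_comm]
  have hη : cexp (2 * Real.pi * I * τ * (1 / 4)) /
      (cexp (2 * Real.pi * I * τ * (1 / 24)) * qPoch q q) ^ 6 = (qPoch q q ^ 6)⁻¹ := by
    have hquarter : cexp (2 * Real.pi * I * τ * (1 / 4)) =
        cexp (2 * Real.pi * I * τ * (1 / 24)) ^ 6 := by
      rw [← Complex.exp_nat_mul]
      ring_nf
    rw [mul_pow, hquarter, div_mul_cancel_left₀ (pow_ne_zero 6 (Complex.exp_ne_zero _))]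
  simp only [hintegrand]
  rw [intervalIntegral.integral_const_mul, integral_jacobiTheta₂_pow_six hτ, hη]
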